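/- arXiv:2602.20755 — 17 statements merged into one kernel-verified Lean document; each statement's English description precedes it below -/
import Mathlib

section
/- Let (k : K → X, f : X → M) be a monoid extension, m ∈ M and u ∈ B_m. Then the map θ from the set of invertible elements of K to B_m defined by θ(a) = k(a) + u is a bijection. -/
/-- A monoid extension: `K`, `X` additive monoids (not assumed commutative),
`M` a multiplicative monoid, `k : K → X` an injective monoid homomorphism whose image
is `{x | f x = 1}`, and `f : X → M` a surjective monoid homomorphism. -/
structure MonoidExtension {K X M : Type*} [AddMonoid K] [AddMonoid X] [Monoid M]
    (k : K → X) (f : X → M) : Prop where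
  k_add : ∀ a b : K, k (a + b) = k a + k b
  k_zero : k 0 = 0
  k_inj : Function.Injective k
  ker_eq : ∀ x : X, f x = 1 ↔ x ∈ Set.range k
  f_add : ∀ x y : X, f (x + y) = f x * f y
  f_zero : f 0 = 1
  f_surj : Function.Surjective f

/-- The set `B_m` of representatives of `m`. -/
def Reps {K X M : Type*} [AddMonoid K] [AddMonoid X] [Monoid M]
    (k : K → X) (f : X → M) (m : M) : Set X :=
  {u | f u = m ∧ ∀ x : X, f x = m → ∃! a : K, x = k a + u}

/-- A monoid extension is a Schreier extension if every `m` has a representative. -/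
def IsSchreier {K X M : Type*} [AddMonoid K] [AddMonoid X] [Monoid M]
    (k : K → X) (f : X → M) : Prop :=
  ∀ m : M, (Reps k f m).Nonempty

/-- Corollary 2.3 (cor:group_B): for a monoid extension, `m ∈ M` and `u ∈ B_m`, the map
`θ : U(K) → B_m`, `a ↦ k a + u`, is a bijection from the set of invertible (additive unit)
elements of `K` onto `B_m`. -/
theorem theta_bijection {K X M : Type*} [AddMonoid K] [AddMonoid X] [Monoid M]
    (k : K → X) (f : X → M) (hE : MonoidExtension k f)
    (m : M) (u : X) (hu : u ∈ Reps k f m) :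
    Set.BijOn (fun a : K => k a + u) {a : K | IsAddUnit a} (Reps k f m) := by
  have hk : ∀ (a : K) (x : X), f x = m → f (k a + x) = m := by
    intro a x hx
    rw [hE.f_add, (hE.ker_eq (k a)).2 ⟨a, rfl⟩, one_mul, hx]
  have cancel : ∀ v ∈ Reps k f m, ∀ a b : K, k a + v = k b + v → a = b := by
    intro v hv a b h
    exact (hv.2 (k a + v) (hk a v hv.1)).unique rfl h
  refine ⟨?_, ?_, ?_⟩
  · intro a ha
    obtain ⟨⟨a, b, hab, hba⟩, rfl⟩ := ha
    refine ⟨hk _ u hu.1, ?_⟩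
    intro x hx
    obtain ⟨c, hc, -⟩ := hu.2 x hx
    refine ⟨c + b, ?_, ?_⟩
    · change x = k (c + b) + (k a + u)
      rw [← add_assoc, ← hE.k_add, add_assoc, hba, add_zero, hc]
    · intro d hd
      change x = k d + (k a + u) at hd
      rw [← add_assoc, ← hE.k_add, hc] at hd
      rw [cancel u hu _ _ hd, add_assoc, hab, add_zero]
  · intro a _ b _ h
    exact cancel u hu a b h
  · intro v hv
    obtain ⟨a, ha, -⟩ := hu.2 v hv.1
    obtain ⟨b, hb, -⟩ := hv.2 u hu.1
    have h1 : a + b = 0 := by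
      apply cancel v hv
      rw [hE.k_add, add_assoc, hE.k_zero, zero_add]
      rw [← hb, ← ha]
    have h2 : b + a = 0 := by
      apply cancel u hu
      rw [hE.k_add, add_assoc, hE.k_zero, zero_add]
      rw [← ha, ← hb]
    exact ⟨a, ⟨⟨a, b, h1, h2⟩, rfl⟩, ha.symm⟩
end

section
/- Let (k : K → X, f : X → M) be a Schreier extension. The following statements are equivalent: (1) B_m = {x ∈ X : f(x) = m} for every m ∈ M; (2) B_1 = {x ∈ X : f(x) = 1}; (3) every element of K is invertible (i.e. K is a group). -/
/-- Proposition 2.5 (prop:K_group): for a Schreier extension the following are equivalent: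
(1) `B_m = f⁻¹ m` for all `m`; (2) `B_1 = Ker f`; (3) every element of `K` is invertible
(`K` is a group). -/
theorem kernel_group_tfae {K X M : Type*} [AddMonoid K] [AddMonoid X] [Monoid M]
    (k : K → X) (f : X → M) (hE : MonoidExtension k f) (hS : IsSchreier k f) :
    [(∀ m : M, Reps k f m = {x : X | f x = m}),
     (Reps k f 1 = {x : X | f x = 1}),
     (∀ a : K, IsAddUnit a)].TFAE := by
  tfae_have 1 → 2 := fun h => h 1
  tfae_have 2 → 3 := by
    intro h
    have left : ∀ a : K, ∃ b : K, b + a = 0 := by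
      intro a
      have ha : k a ∈ Reps k f 1 := by
        rw [h]
        exact (hE.ker_eq _).2 ⟨a, rfl⟩
      obtain ⟨b, hb, -⟩ := ha.2 0 hE.f_zero
      refine ⟨b, hE.k_inj ?_⟩
      rw [hE.k_add, hE.k_zero]
      exact hb.symm
    intro a
    obtain ⟨b, hb⟩ := left a
    obtain ⟨c, hc⟩ := left b
    have hca : c = a := by
      calc c = c + (b + a) := by rw [hb, add_zero]
        _ = a := by rw [← add_assoc, hc, zero_add]
    subst hca
    exact ⟨⟨c, b, hc, hb⟩, rfl⟩
  tfae_have 3 → 1 := by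
    intro h m
    ext x
    refine ⟨fun hx => hx.1, fun hx => ⟨hx, fun y hy => ?_⟩⟩
    obtain ⟨u, -, hu⟩ := hS m
    obtain ⟨c, hc, -⟩ := hu x hx
    obtain ⟨a, ha, huniq⟩ := hu y hy
    obtain ⟨v, rfl⟩ := h c
    refine ⟨a + ↑(-v), ?_, ?_⟩
    · show y = k (a + ↑(-v)) + x
      rw [hc, ← add_assoc, ← hE.k_add, add_assoc a, AddUnits.neg_add, add_zero]
      exact ha
    · intro b hb
      have hb' : y = k b + x := hb
      have h1 : b + ↑v = a := huniq _ (by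
        show y = k (b + ↑v) + u
        rw [hE.k_add, add_assoc, ← hc]
        exact hb')
      rw [← h1, add_assoc, AddUnits.add_neg, add_zero]
  tfae_finish
end

section
/- Let (k : K → X, f : X → M) be a Schreier extension. Then f is a cokernel of k: for every monoid Z and every monoid homomorphism g : X → Z such that g(k(a)) = 0 for all a ∈ K, there exists a unique monoid homomorphism φ : M → Z with φ ∘ f = g. -/
/-- Proposition 2.6 (prop:f_normal): for a Schreier extension, `f` is a cokernel of `k`:
every monoid homomorphism `g : X → Z` with `g ∘ k = 0` factors uniquely through `f`
via a monoid homomorphism `φ : M → Z`. -/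
theorem schreier_cokernel {K X M Z : Type*} [AddMonoid K] [AddMonoid X] [Monoid M]
    [AddMonoid Z]
    (k : K → X) (f : X → M) (hE : MonoidExtension k f) (hS : IsSchreier k f)
    (g : X → Z) (hg_add : ∀ x y : X, g (x + y) = g x + g y) (hg_zero : g 0 = 0)
    (hgk : ∀ a : K, g (k a) = 0) :
    ∃! φ : M → Z, (∀ m m' : M, φ (m * m') = φ m + φ m') ∧ φ 1 = 0 ∧
      ∀ x : X, φ (f x) = g x := by
  choose s hs using hS
  have key : ∀ x, g (s (f x)) = g x := by
    intro x
    obtain ⟨a, ha, -⟩ := (hs (f x)).2 x rfl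
    have h := congrArg g ha
    rw [hg_add, hgk, zero_add] at h
    exact h.symm
  refine ⟨fun m => g (s m), ⟨?_, ?_, key⟩, ?_⟩
  · intro m m'
    obtain ⟨x, rfl⟩ := hE.f_surj m
    obtain ⟨y, rfl⟩ := hE.f_surj m'
    simp only [← hE.f_add, key, hg_add]
  · simp only [← hE.f_zero, key, hg_zero]
  · rintro ψ ⟨-, -, h⟩
    funext m
    obtain ⟨x, rfl⟩ := hE.f_surj m
    simp only [h, key]
end

section
/- Let (α1, α2, α3) be a morphism of monoid extensions from (k : K → X, f : X → M) to (k' : K' → X', f' : X' → M'), and let m ∈ M. If α2(u) ∈ B'_{α3(m)} for some u ∈ B_m, then α2(v) ∈ B'_{α3(m)} for every v ∈ B_m. -/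
/-- Proposition 2.8 (prop:rep_pres): given a morphism `(α1, α2, α3)` of monoid extensions
and `m ∈ M`, if `α2 u ∈ B'_{α3 m}` for some `u ∈ B_m`, then `α2 v ∈ B'_{α3 m}` for
every `v ∈ B_m`. -/
theorem morphism_preserves_reps {K X M K' X' M' : Type*}
    [AddMonoid K] [AddMonoid X] [Monoid M] [AddMonoid K'] [AddMonoid X'] [Monoid M']
    (k : K → X) (f : X → M) (k' : K' → X') (f' : X' → M')
    (hE : MonoidExtension k f) (hE' : MonoidExtension k' f')
    (α1 : K → K') (α2 : X → X') (α3 : M → M')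
    (hα1_add : ∀ a b : K, α1 (a + b) = α1 a + α1 b) (hα1_zero : α1 0 = 0)
    (hα2_add : ∀ x y : X, α2 (x + y) = α2 x + α2 y) (hα2_zero : α2 0 = 0)
    (hα3_mul : ∀ m n : M, α3 (m * n) = α3 m * α3 n) (hα3_one : α3 1 = 1)
    (hsq1 : ∀ a : K, α2 (k a) = k' (α1 a))
    (hsq2 : ∀ x : X, f' (α2 x) = α3 (f x))
    (m : M) (u : X) (hu : u ∈ Reps k f m) (hαu : α2 u ∈ Reps k' f' (α3 m)) :
    ∀ v ∈ Reps k f m, α2 v ∈ Reps k' f' (α3 m) := by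
  intro v hv
  obtain ⟨a, ha, -⟩ := hu.2 v hv.1
  obtain ⟨b, hb, -⟩ := hv.2 u hu.1
  have hab : a + b = 0 := by
    refine (hv.2 v hv.1).unique ?_ ?_
    · rw [hE.k_add, add_assoc, ← hb, ← ha]
    · rw [hE.k_zero, zero_add]
  have hab' : α1 a + α1 b = 0 := by rw [← hα1_add, hab, hα1_zero]
  have hv' : α2 v = k' (α1 a) + α2 u := by rw [← hsq1, ← hα2_add, ← ha]
  have hu' : α2 u = k' (α1 b) + α2 v := by rw [← hsq1, ← hα2_add, ← hb]
  refine ⟨by rw [hsq2, hv.1], fun x hx => ?_⟩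
  obtain ⟨c, hc, huniq⟩ := hαu.2 x hx
  refine ⟨c + α1 b, ?_, fun d hd => ?_⟩
  · change x = k' (c + α1 b) + α2 v
    rw [hE'.k_add, add_assoc, ← hu']
    exact hc
  · have hd' : d + α1 a = c := by
      apply huniq
      change x = k' (d + α1 a) + α2 u
      rw [hE'.k_add, add_assoc, ← hv']
      exact hd
    rw [← hd', add_assoc, hab', add_zero]
end

section
/- Let (α1, α2, α3) be a morphism of Schreier extensions from (k : K → X, f : X → M) to (k' : K' → X', f' : X' → M'). If α1 and α3 are injective, then α2 is injective. -/
/-- Short Five Lemma for Schreier extensions, part 1 (Proposition 2.9(1)): if `α1` and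
`α3` are injective, then `α2` is injective. -/
theorem short_five_mono {K X M K' X' M' : Type*}
    [AddMonoid K] [AddMonoid X] [Monoid M] [AddMonoid K'] [AddMonoid X'] [Monoid M']
    (k : K → X) (f : X → M) (k' : K' → X') (f' : X' → M')
    (hE : MonoidExtension k f) (hE' : MonoidExtension k' f')
    (hS : IsSchreier k f) (hS' : IsSchreier k' f')
    (α1 : K → K') (α2 : X → X') (α3 : M → M')
    (hα1_add : ∀ a b : K, α1 (a + b) = α1 a + α1 b) (hα1_zero : α1 0 = 0)
    (hα2_add : ∀ x y : X, α2 (x + y) = α2 x + α2 y) (hα2_zero : α2 0 = 0)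
    (hα3_mul : ∀ m n : M, α3 (m * n) = α3 m * α3 n) (hα3_one : α3 1 = 1)
    (hsq1 : ∀ a : K, α2 (k a) = k' (α1 a))
    (hsq2 : ∀ x : X, f' (α2 x) = α3 (f x))
    (hrep : ∀ m : M, ∀ u ∈ Reps k f m, α2 u ∈ Reps k' f' (α3 m))
    (h1 : Function.Injective α1) (h3 : Function.Injective α3) :
    Function.Injective α2 := by
  intro x y hxy
  have hf : f x = f y := h3 (by rw [← hsq2, ← hsq2, hxy])
  obtain ⟨u, hu⟩ := hS (f x)
  obtain ⟨a, ha, -⟩ := hu.2 x rfl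
  obtain ⟨b, hb, -⟩ := hu.2 y hf.symm
  have hu' := hrep _ u hu
  have hx : α2 x = k' (α1 a) + α2 u := by
    rw [← hsq1, ← hα2_add, ← ha]
  have hy : α2 x = k' (α1 b) + α2 u := by
    rw [hxy, ← hsq1, ← hα2_add, ← hb]
  have hab : a = b := h1 ((hu'.2 (α2 x) (hsq2 x)).unique hx hy)
  rw [ha, hb, hab]
end

section
/- Let (α1, α2, α3) be a morphism of Schreier extensions from (k : K → X, f : X → M) to (k' : K' → X', f' : X' → M'). If α1 and α3 are surjective, then α2 is surjective. -/
/-- Short Five Lemma for Schreier extensions, part 2 (Proposition 2.9(2)): if `α1` and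
`α3` are surjective, then `α2` is surjective. -/
theorem short_five_epi {K X M K' X' M' : Type*}
    [AddMonoid K] [AddMonoid X] [Monoid M] [AddMonoid K'] [AddMonoid X'] [Monoid M']
    (k : K → X) (f : X → M) (k' : K' → X') (f' : X' → M')
    (hE : MonoidExtension k f) (hE' : MonoidExtension k' f')
    (hS : IsSchreier k f) (hS' : IsSchreier k' f')
    (α1 : K → K') (α2 : X → X') (α3 : M → M')
    (hα1_add : ∀ a b : K, α1 (a + b) = α1 a + α1 b) (hα1_zero : α1 0 = 0)
    (hα2_add : ∀ x y : X, α2 (x + y) = α2 x + α2 y) (hα2_zero : α2 0 = 0)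
    (hα3_mul : ∀ m n : M, α3 (m * n) = α3 m * α3 n) (hα3_one : α3 1 = 1)
    (hsq1 : ∀ a : K, α2 (k a) = k' (α1 a))
    (hsq2 : ∀ x : X, f' (α2 x) = α3 (f x))
    (hrep : ∀ m : M, ∀ u ∈ Reps k f m, α2 u ∈ Reps k' f' (α3 m))
    (h1 : Function.Surjective α1) (h3 : Function.Surjective α3) :
    Function.Surjective α2 := by
  intro y
  obtain ⟨m, hm⟩ := h3 (f' y)
  obtain ⟨u, hu⟩ := hS m
  obtain ⟨b, hb, -⟩ := (hrep m u hu).2 y hm.symm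
  obtain ⟨a, rfl⟩ := h1 b
  exact ⟨k a + u, by rw [hα2_add, hsq1, hb]⟩
end

section
/- Let (k : K → X, f : X → M) be a Schreier extension with K commutative, let m ∈ M, a ∈ K, and let u, v ∈ B_m be two representatives of m. If b, c ∈ K satisfy u + k(a) = k(b) + u and v + k(a) = k(c) + v, then b = c. (Hence the assignment (m, a) ↦ m ∗ a, where m ∗ a is the unique b with u + k(a) = k(b) + u for a representative u of m, is well defined, independently of the choice of representative.) -/
/-- Well-definedness of the induced action (Section 3): for a Schreier extension with `K`
commutative, if `u, v ∈ B_m` and `b, c ∈ K` satisfy `u + k a = k b + u` and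
`v + k a = k c + v`, then `b = c`; hence `m ∗ a` is independent of the chosen
representative. -/
theorem action_well_defined {K X M : Type*} [AddCommMonoid K] [AddMonoid X] [Monoid M]
    (k : K → X) (f : X → M) (hE : MonoidExtension k f) (hS : IsSchreier k f)
    (m : M) (a : K) (u v : X) (hu : u ∈ Reps k f m) (hv : v ∈ Reps k f m)
    (b c : K) (hb : u + k a = k b + u) (hc : v + k a = k c + v) :
    b = c := by
  obtain ⟨g, hg, -⟩ := hu.2 v hv.1
  have h1 : v + k a = k b + v := by
    calc v + k a = k g + u + k a := by rw [← hg]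
      _ = k g + (k b + u) := by rw [add_assoc, hb]
      _ = k (g + b) + u := by rw [hE.k_add, add_assoc]
      _ = k b + (k g + u) := by rw [add_comm g b, hE.k_add, add_assoc]
      _ = k b + v := by rw [← hg]
  have hka : f (k a) = 1 := (hE.ker_eq _).2 ⟨a, rfl⟩
  have hf : f (v + k a) = m := by rw [hE.f_add, hka, mul_one, hv.1]
  exact (hv.2 _ hf).unique h1 hc
end

section
/- Let (k : K → X, f : X → M) be a Schreier extension with K commutative. Then the induced map ∗ satisfies: (A1) 1 ∗ a = a for all a ∈ K; (A2) m ∗ 0 = 0 for all m ∈ M; (A3) m ∗ (a + a') = m ∗ a + m ∗ a' for all m ∈ M and a, a' ∈ K. -/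
/-- Proposition 3.1 (prop:monoid action), first part: for a Schreier extension with `K`
commutative, the induced map `∗` (characterised by `u + k a = k (m ∗ a) + u` for any
representative `u` of `m`) satisfies the action axioms (A1), (A2) and (A3). -/
theorem action_axioms_A1_A2_A3 {K X M : Type*} [AddCommMonoid K] [AddMonoid X] [Monoid M]
    (k : K → X) (f : X → M) (hE : MonoidExtension k f) (hS : IsSchreier k f)
    (star : M → K → K)
    (hstar : ∀ (m : M) (a : K) (u : X), u ∈ Reps k f m → u + k a = k (star m a) + u) :
    (∀ a : K, star 1 a = a) ∧
    (∀ m : M, star m 0 = 0) ∧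
    (∀ (m : M) (a a' : K), star m (a + a') = star m a + star m a') := by
  have canc : ∀ (m : M) (u : X), u ∈ Reps k f m → ∀ b c : K, k b + u = k c + u → b = c := by
    intro m u hu b c h
    have hf : f (k b + u) = m := by
      rw [hE.f_add, (hE.ker_eq (k b)).2 ⟨b, rfl⟩, one_mul, hu.1]
    exact (hu.2 _ hf).unique rfl h
  refine ⟨fun a => ?_, fun m => ?_, fun m a a' => ?_⟩
  · have h0 : (0 : X) ∈ Reps k f 1 := by
      refine ⟨hE.f_zero, fun x hx => ?_⟩
      obtain ⟨a, rfl⟩ := (hE.ker_eq x).1 hx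
      refine ⟨a, (add_zero _).symm, fun b hb => ?_⟩
      simp only [add_zero] at hb
      exact (hE.k_inj hb).symm
    have h := hstar 1 a 0 h0
    rw [zero_add, add_zero] at h
    exact (hE.k_inj h).symm
  · obtain ⟨u, hu⟩ := hS m
    apply canc m u hu
    rw [← hstar m 0 u hu, hE.k_zero, add_zero, zero_add]
  · obtain ⟨u, hu⟩ := hS m
    apply canc m u hu
    rw [← hstar m _ u hu, hE.k_add, hE.k_add, ← add_assoc, hstar m a u hu, add_assoc,
      hstar m a' u hu, add_assoc]
end

section
/- Let (k : K → X, f : X → M) be a Schreier extension with K commutative and cancellative. Then the induced map ∗ also satisfies (A4): (m' · m) ∗ a = m' ∗ (m ∗ a) for all m, m' ∈ M and a ∈ K. Consequently ∗ is a monoid action of M on K, i.e. the map η : M → End(K), η(m)(a) = m ∗ a, is a monoid homomorphism into the endomorphism monoid of K. -/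
/-- Proposition 3.1 (prop:monoid action), second part: for a Schreier extension with `K`
commutative and cancellative, the induced map `∗` also satisfies axiom (A4), and hence
defines a monoid action of `M` on `K`, i.e. a monoid homomorphism
`η : M →* AddMonoid.End K` with `η m a = m ∗ a`. -/
theorem action_axiom_A4 {K X M : Type*} [AddCommMonoid K] [IsCancelAdd K]
    [AddMonoid X] [Monoid M]
    (k : K → X) (f : X → M) (hE : MonoidExtension k f) (hS : IsSchreier k f)
    (star : M → K → K)
    (hstar : ∀ (m : M) (a : K) (u : X), u ∈ Reps k f m → u + k a = k (star m a) + u) :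
    (∀ (m m' : M) (a : K), star (m' * m) a = star m' (star m a)) ∧
    (∃ η : M →* AddMonoid.End K, ∀ (m : M) (a : K), η m a = star m a) := by
  have cancel : ∀ (m : M) (u : X), u ∈ Reps k f m → ∀ a b : K, k a + u = k b + u → a = b := by
    intro m u hu a b h
    have hf : f (k a + u) = m := by
      rw [hE.f_add, (hE.ker_eq (k a)).2 ⟨a, rfl⟩, one_mul, hu.1]
    exact (hu.2 _ hf).unique rfl h
  have A4 : ∀ (m m' : M) (a : K), star (m' * m) a = star m' (star m a) := by
    intro m m' a
    obtain ⟨u, hu⟩ := hS m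
    obtain ⟨v, hv⟩ := hS m'
    obtain ⟨w, hw⟩ := hS (m' * m)
    obtain ⟨c, hc, -⟩ := hw.2 (v + u) (by rw [hE.f_add, hv.1, hu.1])
    have h1 : v + u + k a = k (star m' (star m a) + c) + w := by
      rw [add_assoc, hstar m a u hu, ← add_assoc, hstar m' _ v hv, add_assoc, hc, ← add_assoc,
        hE.k_add]
    have h2 : v + u + k a = k (c + star (m' * m) a) + w := by
      rw [hc, add_assoc, hstar _ a w hw, ← add_assoc, hE.k_add]
    have h3 := cancel _ w hw _ _ (h2.symm.trans h1)
    rw [add_comm] at h3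
    exact add_right_cancel h3
  have star_zero : ∀ m : M, star m 0 = 0 := by
    intro m
    obtain ⟨u, hu⟩ := hS m
    apply cancel m u hu
    rw [← hstar m 0 u hu, hE.k_zero, add_zero, zero_add]
  have star_add : ∀ (m : M) (a b : K), star m (a + b) = star m a + star m b := by
    intro m a b
    obtain ⟨u, hu⟩ := hS m
    apply cancel m u hu
    rw [← hstar m _ u hu, hE.k_add, hE.k_add, ← add_assoc, hstar m a u hu, add_assoc,
      hstar m b u hu, add_assoc]
  have star_one : ∀ a : K, star 1 a = a := by
    intro a
    have h0 : (0 : X) ∈ Reps k f 1 := by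
      refine ⟨hE.f_zero, fun x hx => ?_⟩
      obtain ⟨c, rfl⟩ := (hE.ker_eq x).1 hx
      refine ⟨c, (add_zero _).symm, fun d hd => ?_⟩
      have hd' : k c = k d + 0 := hd
      rw [add_zero] at hd'
      exact (hE.k_inj hd').symm
    have h := hstar 1 a 0 h0
    rw [zero_add, add_zero] at h
    exact (hE.k_inj h).symm
  refine ⟨A4, ⟨⟨⟨fun m => ⟨⟨star m, star_zero m⟩, star_add m⟩, ?_⟩, ?_⟩, ?_⟩⟩
  · ext a
    exact star_one a
  · intro m' m
    ext a
    exact A4 m m' a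
  · intro m a
    rfl
end

section
/- Let (k : K → X, f : X → M) be a Schreier extension with K commutative. Then for all x ∈ X and a ∈ K, x + k(a) = k(f(x) ∗ a) + x. -/
/-- Lemma 3.3 (lemma:patrick): for a Schreier extension with `K` commutative,
`x + k a = k (f x ∗ a) + x` for all `x ∈ X` and `a ∈ K`. -/
theorem patrick_lemma {K X M : Type*} [AddCommMonoid K] [AddMonoid X] [Monoid M]
    (k : K → X) (f : X → M) (hE : MonoidExtension k f) (hS : IsSchreier k f)
    (star : M → K → K)
    (hstar : ∀ (m : M) (a : K) (u : X), u ∈ Reps k f m → u + k a = k (star m a) + u) :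
    ∀ (x : X) (a : K), x + k a = k (star (f x) a) + x := by
  intro x a
  obtain ⟨u, hu⟩ := hS (f x)
  obtain ⟨b, hb, -⟩ := hu.2 x rfl
  have h := hstar (f x) a u hu
  generalize star (f x) a = c at h ⊢
  rw [hb, add_assoc, h, ← add_assoc, ← add_assoc, ← hE.k_add, ← hE.k_add, add_comm b c]
end

section
/- Let (k : K → X, f : X → M) be a Schreier extension with K commutative. Then for all x, y ∈ X and a, b ∈ K one has (k(a) + x) + (k(b) + y) = k(a + f(x) ∗ b) + (x + y); consequently, the relation R_E = {(x, z) ∈ X × X : z = k(a) + x for some a ∈ K} is a submonoid of X × X containing the diagonal (i.e. R_E is an internal reflexive relation on X in the category of monoids). -/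
/-- Section 5: for a Schreier extension with `K` commutative,
`(k a + x) + (k b + y) = k (a + f x ∗ b) + (x + y)`, and consequently the relation
`R_E = {(x, z) | ∃ a, z = k a + x}` is a submonoid of `X × X` containing the diagonal
(an internal reflexive relation on `X` in monoids). -/
theorem RE_internal_reflexive_relation {K X M : Type*} [AddCommMonoid K] [AddMonoid X]
    [Monoid M]
    (k : K → X) (f : X → M) (hE : MonoidExtension k f) (hS : IsSchreier k f)
    (star : M → K → K)
    (hstar : ∀ (m : M) (a : K) (u : X), u ∈ Reps k f m → u + k a = k (star m a) + u) :
    (∀ (x y : X) (a b : K), (k a + x) + (k b + y) = k (a + star (f x) b) + (x + y)) ∧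
    (∃ S : AddSubmonoid (X × X),
      (S : Set (X × X)) = {p : X × X | ∃ a : K, p.2 = k a + p.1} ∧
      ∀ x : X, (x, x) ∈ S) := by
  have key : ∀ (x : X) (b : K), x + k b = k (star (f x) b) + x := by
    intro x b
    obtain ⟨u, hu⟩ := hS (f x)
    obtain ⟨c, hc, -⟩ := hu.2 x rfl
    have h := hstar (f x) b u hu
    calc x + k b = k c + (u + k b) := by
          conv_lhs => rw [hc]
          rw [add_assoc]
      _ = k (star (f x) b) + (k c + u) := by
          rw [h, ← add_assoc, ← add_assoc, ← hE.k_add, ← hE.k_add, add_comm c]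
      _ = k (star (f x) b) + x := by rw [← hc]
  have main : ∀ (x y : X) (a b : K),
      (k a + x) + (k b + y) = k (a + star (f x) b) + (x + y) := by
    intro x y a b
    calc (k a + x) + (k b + y) = k a + ((x + k b) + y) := by simp only [add_assoc]
      _ = k (a + star (f x) b) + (x + y) := by
          rw [key, hE.k_add]
          simp only [add_assoc]
  refine ⟨main, ⟨⟨⟨{p : X × X | ∃ a : K, p.2 = k a + p.1}, ?_⟩, ?_⟩, rfl, ?_⟩⟩
  · rintro ⟨x, z⟩ ⟨y, w⟩ ⟨a, ha⟩ ⟨b, hb⟩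
    refine ⟨a + star (f x) b, ?_⟩
    simp only at ha hb
    simp only [Prod.mk_add_mk]
    rw [ha, hb, main]
  · exact ⟨0, by simp [hE.k_zero]⟩
  · intro x
    exact ⟨0, by simp [hE.k_zero]⟩
end

section
/- Let (k : K → X, f : X → M) be a Schreier extension with K commutative. Then f is a coequaliser of the two projections of the relation R_E: for every monoid Z and every monoid homomorphism h : X → Z such that h(x) = h(k(a) + x) for all x ∈ X and a ∈ K, there exists a unique monoid homomorphism φ : M → Z with φ ∘ f = h. -/
/-- Proposition 5.1 (prop:f_coeq): for a Schreier extension with `K` commutative, `f` is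
a coequaliser of the two projections of `R_E`: every monoid homomorphism `h : X → Z`
with `h x = h (k a + x)` for all `x, a` factors uniquely through `f`. -/
theorem f_coequaliser_of_RE {K X M Z : Type*} [AddCommMonoid K] [AddMonoid X] [Monoid M]
    [AddMonoid Z]
    (k : K → X) (f : X → M) (hE : MonoidExtension k f) (hS : IsSchreier k f)
    (h : X → Z) (hh_add : ∀ x y : X, h (x + y) = h x + h y) (hh_zero : h 0 = 0)
    (hh : ∀ (x : X) (a : K), h x = h (k a + x)) :
    ∃! φ : M → Z, (∀ m m' : M, φ (m * m') = φ m + φ m') ∧ φ 1 = 0 ∧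
      ∀ x : X, φ (f x) = h x := by
  have key : ∀ x y : X, f x = f y → h x = h y := by
    intro x y hxy
    obtain ⟨u, _, hu⟩ := hS (f y)
    obtain ⟨a, ha, _⟩ := hu x hxy
    obtain ⟨b, hb, _⟩ := hu y rfl
    rw [ha, hb, ← hh, ← hh]
  choose s hs using hE.f_surj
  have hφ : ∀ x : X, h (s (f x)) = h x := fun x => key _ _ (hs _)
  refine ⟨fun m => h (s m), ⟨?_, ?_, hφ⟩, ?_⟩
  · intro m m'
    show h (s (m * m')) = h (s m) + h (s m')
    rw [← hh_add]
    apply key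
    rw [hs, hE.f_add, hs, hs]
  · show h (s 1) = 0
    rw [← hh_zero]
    apply key
    rw [hs, hE.f_zero]
  · rintro ψ ⟨_, _, hψ⟩
    funext m
    show ψ m = h (s m)
    rw [← hψ, hs]
end

section
/- Let (k : K → X, f : X → M) be a Schreier extension with K commutative. Then the relation R_E is symmetric (i.e. (x, z) ∈ R_E implies (z, x) ∈ R_E) if and only if every element of K is invertible (i.e. K is a group). -/
/-- Corollary 5.3 (cor:R_E-symmetric), (3) ⇔ (4): for a Schreier extension with `K`
commutative, the relation `R_E` is symmetric if and only if every element of `K` is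
invertible (i.e. `K` is a group). -/
theorem RE_symmetric_iff_group {K X M : Type*} [AddCommMonoid K] [AddMonoid X] [Monoid M]
    (k : K → X) (f : X → M) (hE : MonoidExtension k f) (hS : IsSchreier k f) :
    (∀ x z : X, (∃ a : K, z = k a + x) → ∃ a : K, x = k a + z) ↔
      (∀ a : K, IsAddUnit a) := by
  constructor
  · intro h a
    obtain ⟨b, hb⟩ := h 0 (k a) ⟨a, by rw [add_zero]⟩
    have hba : b + a = 0 := by
      apply hE.k_inj
      rw [hE.k_add, hE.k_zero, ← hb]
    exact IsAddUnit.of_add_eq_zero b (by rw [add_comm, hba])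
  · rintro h x z ⟨a, rfl⟩
    obtain ⟨b, hb⟩ := (h a).exists_neg'
    exact ⟨b, by rw [← add_assoc, ← hE.k_add, hb, hE.k_zero, zero_add]⟩
end

section
/- Let (k : K → X, f : X → M) be a Schreier extension with K commutative and cancellative. Then for all x ∈ X and a, a' ∈ K, k(a) + x = k(a') + x implies a = a'. In particular, whenever (x, y) ∈ R_E, the element a ∈ K with y = k(a) + x is unique. -/
/-- Lemma 5.4 (lemma:unique_a): for a cc-Schreier extension (Schreier extension with `K`
commutative and cancellative), `k a + x = k a' + x` implies `a = a'`; in particular,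
for `(x, y) ∈ R_E` the element `a ∈ K` with `y = k a + x` is unique. -/
theorem unique_a {K X M : Type*} [AddCommMonoid K] [IsCancelAdd K] [AddMonoid X]
    [Monoid M]
    (k : K → X) (f : X → M) (hE : MonoidExtension k f) (hS : IsSchreier k f) :
    (∀ (x : X) (a a' : K), k a + x = k a' + x → a = a') ∧
    (∀ x y : X, (∃ a : K, y = k a + x) → ∃! a : K, y = k a + x) := by
  have key : ∀ (x : X) (a a' : K), k a + x = k a' + x → a = a' := by
    intro x a a' h
    obtain ⟨u, hu, hrep⟩ := hS (f x)
    obtain ⟨b, hb, -⟩ := hrep x rfl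
    have h1 : k a + x = k (a + b) + u := by
      rw [hE.k_add, add_assoc, ← hb]
    have h2 : k a + x = k (a' + b) + u := by
      rw [h, hE.k_add, add_assoc, ← hb]
    have hf : f (k a + x) = f x := by
      rw [hE.f_add, (hE.ker_eq (k a)).2 ⟨a, rfl⟩, one_mul]
    exact add_right_cancel ((hrep _ hf).unique h1 h2)
  refine ⟨key, ?_⟩
  rintro x y ⟨a, rfl⟩
  exact ⟨a, rfl, fun b hb => (key x a b hb).symm⟩
end

section
/- Let (k : K → X, f : X → M) be a Schreier extension with K commutative and cancellative, and let P = {(x, y, z) ∈ X × X × X : (x, y) ∈ R_E and (y, z) ∈ R_E}, a submonoid of X × X × X. Then the function p : P → X that sends (x, y, z) to k(b) + x, where b is the unique element of K with z = k(b) + y, is well defined and is a monoid homomorphism; moreover p satisfies p(x, x, z) = z for all (x, x, z) ∈ P and p(x, y, y) = x for all (x, y, y) ∈ P. (Thus the relation R_E centralises itself, with connector p.) -/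
theorem RE_aux_unique {K X M : Type*} [AddCommMonoid K] [IsCancelAdd K]
    [AddMonoid X] [Monoid M]
    (k : K → X) (f : X → M) (hE : MonoidExtension k f) (hS : IsSchreier k f)
    (y : X) (b c : K) (h : k b + y = k c + y) : b = c := by
  obtain ⟨u, hu, hr⟩ := hS (f y)
  obtain ⟨d, hd, -⟩ := hr y rfl
  have hf : f (k (b + d) + u) = f y := by
    rw [hE.f_add, (hE.ker_eq _).2 ⟨_, rfl⟩, one_mul, hu]
  obtain ⟨e, -, he⟩ := hr _ hf
  have h1 := he (b + d) rfl
  have h2 := he (c + d) (by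
    change k (b + d) + u = k (c + d) + u
    rw [hE.k_add, hE.k_add, add_assoc, add_assoc, ← hd, h])
  exact add_right_cancel (h1.trans h2.symm)

theorem RE_aux_act {K X M : Type*} [AddCommMonoid K] [IsCancelAdd K]
    [AddMonoid X] [Monoid M]
    (k : K → X) (f : X → M) (hE : MonoidExtension k f) (hS : IsSchreier k f)
    (m : M) (b : K) : ∃ e : K, ∀ x : X, f x = m → x + k b = k e + x := by
  obtain ⟨u, hu, hr⟩ := hS m
  have hf : f (u + k b) = m := by
    rw [hE.f_add, (hE.ker_eq (k b)).2 ⟨_, rfl⟩, mul_one, hu]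
  obtain ⟨e, he, -⟩ := hr _ hf
  refine ⟨e, fun x hx => ?_⟩
  obtain ⟨d, hd, -⟩ := hr x hx
  rw [hd, add_assoc, he, ← add_assoc, ← add_assoc, ← hE.k_add, ← hE.k_add, add_comm]

/-- Section 5 (self-centralisation of `R_E`): for a cc-Schreier extension, on the
submonoid `P = {(x, y, z) | (x, y) ∈ R_E ∧ (y, z) ∈ R_E}` of `X × X × X` the assignment
`(x, y, z) ↦ k b + x`, where `b` is the unique element with `z = k b + y`, is a
well-defined monoid homomorphism `p` satisfying the connector (Mal'tsev) identities
`p (x, x, z) = z` and `p (x, y, y) = x`. -/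
theorem RE_self_centralising {K X M : Type*} [AddCommMonoid K] [IsCancelAdd K]
    [AddMonoid X] [Monoid M]
    (k : K → X) (f : X → M) (hE : MonoidExtension k f) (hS : IsSchreier k f) :
    ∃ p : X × X × X → X,
      (∀ x y z : X, (∃ a : K, y = k a + x) → ∀ b : K, z = k b + y → p (x, y, z) = k b + x) ∧
      p 0 = 0 ∧
      (∀ s t : X × X × X,
        ((∃ a : K, s.2.1 = k a + s.1) ∧ (∃ b : K, s.2.2 = k b + s.2.1)) →
        ((∃ a : K, t.2.1 = k a + t.1) ∧ (∃ b : K, t.2.2 = k b + t.2.1)) →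
        p (s + t) = p s + p t) ∧
      (∀ x z : X, (∃ b : K, z = k b + x) → p (x, x, z) = z) ∧
      (∀ x y : X, (∃ a : K, y = k a + x) → p (x, y, y) = x) := by
  classical
  let p : X × X × X → X := fun s =>
    if h : ∃ b : K, s.2.2 = k b + s.2.1 then k h.choose + s.1 else 0
  have hp : ∀ x y z : X, ∀ b : K, z = k b + y → p (x, y, z) = k b + x := by
    intro x y z b hb
    have h : ∃ b : K, z = k b + y := ⟨b, hb⟩
    have h1 : p (x, y, z) = k h.choose + x := dif_pos h
    rw [h1, RE_aux_unique k f hE hS y h.choose b (h.choose_spec.symm.trans hb)]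
  refine ⟨p, fun x y z _ => hp x y z, ?_, ?_, ?_, ?_⟩
  · have := hp 0 0 0 0 (by simp [hE.k_zero])
    rw [hE.k_zero, add_zero] at this
    exact this
  · rintro ⟨x, y, z⟩ ⟨x', y', z'⟩ ⟨⟨a, ha⟩, b, hb⟩ ⟨-, b', hb'⟩
    dsimp only at ha hb hb'
    obtain ⟨e, he⟩ := RE_aux_act k f hE hS (f x) b'
    have hy : f y = f x := by
      rw [ha, hE.f_add, (hE.ker_eq _).2 ⟨_, rfl⟩, one_mul]
    have hz : z + z' = k (b + e) + (y + y') := by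
      rw [hb, hb', hE.k_add, add_assoc, ← add_assoc y, he y hy]
      simp only [add_assoc]
    rw [hp x y z b hb, hp x' y' z' b' hb']
    refine (hp (x + x') (y + y') (z + z') _ hz).trans ?_
    rw [hE.k_add, add_assoc (k b) x, ← add_assoc x, he x rfl]
    simp only [add_assoc]
  · rintro x z ⟨b, hb⟩
    rw [hp x x z b hb, hb]
  · rintro x y -
    rw [hp x y y 0 (by rw [hE.k_zero, zero_add]), hE.k_zero, zero_add]
end

section
/- Let (k : K → X, f : X → M) and (k' : K' → X', f' : X' → M) be Schreier extensions over the same monoid M, with K and K' commutative, and let ∗ and ∗' be the induced maps. Let X ×_M X' = {(x, x') ∈ X × X' : f(x) = f'(x')} (a submonoid of X × X'), let k'' : K × K' → X ×_M X' be (a, a') ↦ (k(a), k'(a')) and f'' : X ×_M X' → M be (x, x') ↦ f(x). Then (k'', f'') is a Schreier extension over M in which, for every m ∈ M, every pair (u, u') with u ∈ B_m and u' ∈ B'_m is a representative of m; and its induced map ∗'' satisfies m ∗'' (a, a') = (m ∗ a, m ∗' a') for all m ∈ M, a ∈ K, a' ∈ K'. -/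
/-- Product of Schreier extensions (Proposition 7.3, prop:d_products): given two Schreier
extensions over the same `M` with commutative kernels, the fibre product
`X ×_M X' = {(x, x') | f x = f' x'}` with `k'' (a, a') = (k a, k' a')` and
`f'' (x, x') = f x` is a Schreier extension over `M` in which every pair `(u, u')` of
representatives of `m` is a representative of `m`, and whose induced action satisfies
`m ∗'' (a, a') = (m ∗ a, m ∗' a')`.  Everything is phrased inside the ambient monoid
`X × X'`, relativised to the fibre-product submonoid `{p | f p.1 = f' p.2}`. -/
theorem product_schreier_extension {K X M K' X' : Type*}
    [AddCommMonoid K] [AddMonoid X] [Monoid M] [AddCommMonoid K'] [AddMonoid X']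
    (k : K → X) (f : X → M) (k' : K' → X') (f' : X' → M)
    (hE : MonoidExtension k f) (hE' : MonoidExtension k' f')
    (hS : IsSchreier k f) (hS' : IsSchreier k' f')
    (star : M → K → K) (star' : M → K' → K')
    (hstar : ∀ (m : M) (a : K) (u : X), u ∈ Reps k f m → u + k a = k (star m a) + u)
    (hstar' : ∀ (m : M) (a : K') (u : X'), u ∈ Reps k' f' m →
      u + k' a = k' (star' m a) + u) :
    -- the fibre product `D = {p | f p.1 = f' p.2}` is a submonoid of `X × X'`
    (f (0 : X) = f' (0 : X')) ∧
    (∀ p q : X × X', f p.1 = f' p.2 → f q.1 = f' q.2 → f (p + q).1 = f' (p + q).2) ∧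
    -- `k''` is an injective homomorphism landing in `D`, with image the kernel of `f''`
    Function.Injective (fun c : K × K' => ((k c.1, k' c.2) : X × X')) ∧
    (∀ c : K × K', f (k c.1) = f' (k' c.2)) ∧
    (∀ p : X × X', f p.1 = f' p.2 →
      (f p.1 = 1 ↔ ∃ c : K × K', ((k c.1, k' c.2) : X × X') = p)) ∧
    -- `f''` is surjective from `D` onto `M`
    (∀ m : M, ∃ p : X × X', f p.1 = f' p.2 ∧ f p.1 = m) ∧
    -- every pair of representatives `(u, u')` is a representative for the fibre product
    (∀ (m : M) (u : X) (u' : X'), u ∈ Reps k f m → u' ∈ Reps k' f' m →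
      f u = f' u' ∧ f u = m ∧
      ∀ p : X × X', f p.1 = f' p.2 → f p.1 = m →
        ∃! c : K × K', p = ((k c.1, k' c.2) : X × X') + (u, u')) ∧
    -- the induced action is the product action: `m ∗'' (a, a') = (m ∗ a, m ∗' a')`
    (∀ (m : M) (a : K) (a' : K') (u : X) (u' : X'),
      u ∈ Reps k f m → u' ∈ Reps k' f' m →
      ((u, u') : X × X') + (k a, k' a') =
        ((k (star m a), k' (star' m a')) : X × X') + (u, u')) := by
  have hk : ∀ a, f (k a) = 1 := fun a => (hE.ker_eq _).2 ⟨a, rfl⟩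
  have hk' : ∀ a, f' (k' a) = 1 := fun a => (hE'.ker_eq _).2 ⟨a, rfl⟩
  refine ⟨by rw [hE.f_zero, hE'.f_zero], ?_, ?_, ?_, ?_, ?_, ?_, ?_⟩
  · intro p q hp hq
    rw [Prod.fst_add, Prod.snd_add, hE.f_add, hE'.f_add, hp, hq]
  · rintro ⟨a, a'⟩ ⟨b, b'⟩ h
    have h1 : k a = k b := congrArg Prod.fst h
    have h2 : k' a' = k' b' := congrArg Prod.snd h
    rw [hE.k_inj h1, hE'.k_inj h2]
  · intro c
    rw [hk, hk']
  · rintro ⟨x, x'⟩ hp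
    constructor
    · intro h
      obtain ⟨a, ha⟩ := (hE.ker_eq x).1 h
      obtain ⟨a', ha'⟩ := (hE'.ker_eq x').1 (hp.symm.trans h)
      exact ⟨(a, a'), Prod.ext ha ha'⟩
    · rintro ⟨c, hc⟩
      rw [← hc]
      exact hk _
  · intro m
    obtain ⟨x, hx⟩ := hE.f_surj m
    obtain ⟨x', hx'⟩ := hE'.f_surj m
    exact ⟨(x, x'), hx.trans hx'.symm, hx⟩
  · rintro m u u' ⟨hu, hu2⟩ ⟨hu', hu2'⟩
    refine ⟨hu.trans hu'.symm, hu, ?_⟩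
    rintro ⟨x, x'⟩ hp hm
    obtain ⟨a, ha, hau⟩ := hu2 x hm
    obtain ⟨a', ha', hau'⟩ := hu2' x' (hp.symm.trans hm)
    refine ⟨(a, a'), Prod.ext ha ha', ?_⟩
    rintro ⟨b, b'⟩ hb
    exact Prod.ext (hau b (congrArg Prod.fst hb)) (hau' b' (congrArg Prod.snd hb))
  · intro m a a' u u' hu hu'
    exact Prod.ext (hstar m a u hu) (hstar' m a' u' hu')
end

section
/- Let (k : K → B, f : B → M, s : M → B, q : B → K) be a Schreier point with K commutative, and let Eq(f) = {(x, y) ∈ B × B : f(x) = f(y)}, a submonoid of B × B. Then the map μ : Eq(f) → B defined by μ(x, y) = k(q(x)) + y is a monoid homomorphism; moreover, for all x, y, z ∈ B with f(x) = f(y) = f(z): μ(x, μ(y, z)) = μ(μ(x, y), z) (associativity), μ(x, y) = μ(y, x) (commutativity), and μ(s(f(y)), y) = y (unit law). -/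
/-- Theorem 6.2 (thm:internal_monoids), key computation: given a Schreier point
`(k : K → B, f : B → M, s, q)` with `K` commutative, the map
`μ : Eq(f) → B`, `μ (x, y) = k (q x) + y`, is a monoid homomorphism on the kernel pair
`Eq(f) = {(x, y) | f x = f y}`, and it is associative, commutative and has the section
`s` as unit: `μ (s (f y), y) = y`. -/
theorem schreier_point_multiplication {K B M : Type*} [AddCommMonoid K] [AddMonoid B]
    [Monoid M]
    (k : K → B) (f : B → M) (s : M → B) (q : B → K)
    (hE : MonoidExtension k f)
    (hs_mul : ∀ m n : M, s (m * n) = s m + s n) (hs_one : s 1 = 0)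
    (hfs : ∀ m : M, f (s m) = m)
    (hq : ∀ b : B, b = k (q b) + s (f b))
    (hq_unique : ∀ (b : B) (a : K), b = k a + s (f b) → a = q b) :
    -- `μ` is a monoid homomorphism on `Eq(f)`
    (k (q (0 : B)) + (0 : B) = 0) ∧
    (∀ x y x' y' : B, f x = f y → f x' = f y' →
      k (q (x + x')) + (y + y') = (k (q x) + y) + (k (q x') + y')) ∧
    -- associativity: `μ (x, μ (y, z)) = μ (μ (x, y), z)`
    (∀ x y z : B, f x = f y → f y = f z →
      k (q x) + (k (q y) + z) = k (q (k (q x) + y)) + z) ∧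
    -- commutativity: `μ (x, y) = μ (y, x)`
    (∀ x y : B, f x = f y → k (q x) + y = k (q y) + x) ∧
    -- unit law: `μ (s (f y), y) = y`
    (∀ y : B, k (q (s (f y))) + y = y) := by
  have hfk : ∀ a, f (k a) = 1 := fun a => (hE.ker_eq _).2 ⟨a, rfl⟩
  have kc : ∀ a b, k a + k b = k b + k a := fun a b => by
    rw [← hE.k_add, ← hE.k_add, add_comm]
  have q_add : ∀ a b, q (k a + b) = a + q b := fun a b => by
    symm
    apply hq_unique
    rw [hE.f_add, hfk, one_mul, hE.k_add, add_assoc, ← hq]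
  have act : ∀ m a, s m + k a = k (q (s m + k a)) + s m := fun m a => by
    have h := hq (s m + k a)
    rw [hE.f_add, hfk, mul_one, hfs] at h
    exact h
  have q_s : ∀ m, q (s m) = 0 := fun m => by
    symm
    apply hq_unique
    rw [hfs, hE.k_zero, zero_add]
  have q_sum : ∀ x x', q (x + x') = q x + q (s (f x) + k (q x')) := fun x x' => by
    symm
    apply hq_unique
    rw [hE.f_add, hs_mul, hE.k_add, add_assoc, ← add_assoc _ (s (f x)), ← act,
      add_assoc (s (f x)), ← hq x', ← add_assoc, ← hq x]
  refine ⟨?_, ?_, ?_, ?_, ?_⟩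
  · rw [← hs_one, q_s, hE.k_zero, hs_one, add_zero]
  · intro x y x' y' h _
    have key : k (q (s (f x) + k (q x'))) + y = y + k (q x') := by
      calc k (q (s (f x) + k (q x'))) + y
          = k (q (s (f x) + k (q x'))) + (k (q y) + s (f x)) := by rw [h, ← hq y]
        _ = k (q y) + (k (q (s (f x) + k (q x'))) + s (f x)) := by
            rw [← add_assoc, kc, add_assoc]
        _ = k (q y) + (s (f x) + k (q x')) := by rw [← act]
        _ = y + k (q x') := by rw [h, ← add_assoc, ← hq y]
    rw [q_sum, hE.k_add, add_assoc, ← add_assoc _ y y', key]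
    simp only [add_assoc]
  · intro x y z _ _
    rw [q_add, hE.k_add, add_assoc]
  · intro x y h
    calc k (q x) + y = k (q x) + (k (q y) + s (f y)) := by rw [← hq y]
      _ = k (q y) + (k (q x) + s (f x)) := by rw [← add_assoc, kc, add_assoc, h]
      _ = k (q y) + x := by rw [← hq x]
  · intro y
    rw [q_s, hE.k_zero, zero_add]
end
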